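/- arXiv:2605.31369 — 3 statements merged into one kernel-verified Lean document; each statement's English description precedes it below -/
import Mathlib

section
/- Let μ and ν be probability measures on ℝ^d. Then, as an identity in [0, +∞], KL(μ‖ν) = sup over all bounded measurable functions φ : ℝ^d → ℝ of (∫ φ dμ − log ∫ e^{φ(y)} dν(y)) (Donsker–Varadhan representation); in particular, when μ is not absolutely continuous with respect to ν, both sides equal +∞. -/
open MeasureTheory
open scoped ENNReal Classical

/-- The Kullback–Leibler divergence `KL(μ‖ν) = ∫ log (dμ/dν) dμ`, with values in `[0, +∞]`:
it equals `+∞` when `μ` is not absolutely continuous with respect to `ν`, or when the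
log-likelihood ratio is not `μ`-integrable. -/
noncomputable def klDiv {α : Type*} [MeasurableSpace α] (μ ν : Measure α) : ℝ≥0∞ :=
  if μ ≪ ν ∧ Integrable (fun x => Real.log ((μ.rnDeriv ν x).toReal)) μ
  then ENNReal.ofReal (∫ x, Real.log ((μ.rnDeriv ν x).toReal) ∂μ)
  else ∞

section DVHelpers

open Filter Topology

variable {α : Type*} [MeasurableSpace α]

/-- The Donsker-Varadhan functional. -/
noncomputable def dvJ (μ ν : Measure α) (φ : α → ℝ) : ℝ :=
  ∫ x, φ x ∂μ - Real.log (∫ y, Real.exp (φ y) ∂ν)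

lemma dv_integrable_of_bdd (μ : Measure α) [IsProbabilityMeasure μ] {φ : α → ℝ}
    (hφ : Measurable φ) {C : ℝ} (hC : ∀ x, |φ x| ≤ C) : Integrable φ μ :=
  Integrable.of_bound hφ.aestronglyMeasurable C (Eventually.of_forall hC)

lemma dv_integrable_exp (ν : Measure α) [IsProbabilityMeasure ν] {φ : α → ℝ}
    (hφ : Measurable φ) {C : ℝ} (hC : ∀ x, |φ x| ≤ C) :
    Integrable (fun x => Real.exp (φ x)) ν := by
  refine Integrable.of_bound (Real.measurable_exp.comp hφ).aestronglyMeasurable (Real.exp C)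
    (Eventually.of_forall fun x => ?_)
  rw [Real.norm_eq_abs, abs_of_pos (Real.exp_pos _)]
  exact Real.exp_le_exp.2 ((le_abs_self _).trans (hC x))

lemma dv_upper (μ ν : Measure α) [IsProbabilityMeasure μ] [IsProbabilityMeasure ν]
    (hac : μ ≪ ν) (hint : Integrable (llr μ ν) μ) {φ : α → ℝ}
    (hφ : Measurable φ) {C : ℝ} (hC : ∀ x, |φ x| ≤ C) :
    dvJ μ ν φ ≤ ∫ x, llr μ ν x ∂μ := by
  have h1 := dv_integrable_of_bdd μ hφ hC
  have h2 := dv_integrable_exp ν hφ hC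
  have := isProbabilityMeasure_tilted h2
  have h3 := InformationTheory.integral_llr_add_sub_measure_univ_nonneg
    (hac.trans (absolutelyContinuous_tilted h2)) (integrable_llr_tilted_right hac h1 hint h2)
  rw [integral_llr_tilted_right hac h1 h2 hint] at h3
  simp at h3
  unfold dvJ
  linarith

/-- Truncated log-likelihood ratio. -/
noncomputable def dvTrunc (μ ν : Measure α) (n : ℕ) (x : α) : ℝ :=
  if (μ.rnDeriv ν x).toReal = 0 then -(n : ℝ) else max (-(n : ℝ)) (min (llr μ ν x) n)

lemma dvTrunc_meas (μ ν : Measure α) (n : ℕ) : Measurable (dvTrunc μ ν n) := by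
  unfold dvTrunc
  refine Measurable.ite ?_ measurable_const ?_
  · exact (Measure.measurable_rnDeriv μ ν).ennreal_toReal (measurableSet_singleton 0)
  · exact measurable_const.max ((measurable_llr μ ν).min measurable_const)

lemma dvTrunc_bdd (μ ν : Measure α) (n : ℕ) (x : α) : |dvTrunc μ ν n x| ≤ n := by
  have hn : (0 : ℝ) ≤ n := Nat.cast_nonneg n
  unfold dvTrunc
  split_ifs
  · rw [abs_neg, abs_of_nonneg hn]
  · rw [abs_le]
    exact ⟨le_max_left _ _, max_le (by linarith) (min_le_right _ _)⟩

lemma dvTrunc_exp_le (μ ν : Measure α) (n : ℕ) (x : α) :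
    Real.exp (dvTrunc μ ν n x) ≤ (μ.rnDeriv ν x).toReal + Real.exp (-(n : ℝ)) := by
  have h0 : 0 ≤ (μ.rnDeriv ν x).toReal := ENNReal.toReal_nonneg
  unfold dvTrunc
  split_ifs with h
  · linarith
  · have hpos := lt_of_le_of_ne h0 (Ne.symm h)
    rcases max_choice (-(n : ℝ)) (min (llr μ ν x) n) with h1 | h1 <;> rw [h1]
    · linarith
    · have : Real.exp (min (llr μ ν x) n) ≤ (μ.rnDeriv ν x).toReal := by
        rw [← Real.le_log_iff_exp_le hpos]
        exact min_le_left _ _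
      linarith [Real.exp_pos (-(n : ℝ))]

lemma dvTrunc_ge (μ ν : Measure α) [IsProbabilityMeasure μ] [IsProbabilityMeasure ν] (n : ℕ) :
    ∫ x, dvTrunc μ ν n x ∂μ - Real.exp (-(n : ℝ)) ≤ dvJ μ ν (dvTrunc μ ν n) := by
  have hi := dv_integrable_exp ν (dvTrunc_meas μ ν n) (dvTrunc_bdd μ ν n)
  have hr : Integrable (fun x => (μ.rnDeriv ν x).toReal) ν := Measure.integrable_toReal_rnDeriv
  have h1 : ∫ y, Real.exp (dvTrunc μ ν n y) ∂ν ≤ 1 + Real.exp (-(n : ℝ)) := by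
    calc _ ≤ ∫ y, ((μ.rnDeriv ν y).toReal + Real.exp (-(n : ℝ))) ∂ν :=
          integral_mono hi (hr.add (integrable_const _)) (dvTrunc_exp_le μ ν n)
      _ = ∫ y, (μ.rnDeriv ν y).toReal ∂ν + Real.exp (-(n : ℝ)) := by
          rw [integral_add hr (integrable_const _)]; simp
      _ ≤ _ := by
          have := Measure.setIntegral_toReal_rnDeriv_le (μ := μ) (ν := ν) (s := Set.univ)
            (measure_ne_top μ Set.univ)
          simp at this
          linarith
  have h2 : 0 < ∫ y, Real.exp (dvTrunc μ ν n y) ∂ν := integral_exp_pos hi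
  have h3 := Real.log_le_sub_one_of_pos h2
  unfold dvJ
  linarith

lemma dvTrunc_ae (μ ν : Measure α) [IsProbabilityMeasure μ] [IsProbabilityMeasure ν]
    (hac : μ ≪ ν) : ∀ᵐ x ∂μ, ∀ n, dvTrunc μ ν n x = max (-(n : ℝ)) (min (llr μ ν x) n) := by
  filter_upwards [Measure.rnDeriv_pos hac, hac.ae_le (Measure.rnDeriv_lt_top μ ν)] with x hx hx2 n
  unfold dvTrunc
  rw [if_neg (ENNReal.toReal_pos hx.ne' hx2.ne).ne']

lemma dv_clamp_abs (f : ℝ) (n : ℕ) : |max (-(n : ℝ)) (min f n)| ≤ |f| := by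
  have hn : (0 : ℝ) ≤ n := Nat.cast_nonneg n
  rw [abs_le]
  constructor
  · exact le_max_of_le_right (le_min (neg_abs_le f) (by linarith [abs_nonneg f]))
  · exact max_le (by linarith [abs_nonneg f]) ((min_le_left _ _).trans (le_abs_self f))

lemma dv_clamp_abs' (f : ℝ) (n : ℕ) :
    |max (-(n : ℝ)) (min f n)| ≤ max (-(n : ℝ)) (min f n) + 2 * Real.exp (-f) := by
  have hn : (0 : ℝ) ≤ n := Nat.cast_nonneg n
  have he := Real.exp_pos (-f)
  have he' := Real.add_one_le_exp (-f)
  rcases le_total 0 (max (-(n : ℝ)) (min f n)) with h | h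
  · rw [abs_of_nonneg h]; linarith
  · rw [abs_of_nonpos h]
    have : -Real.exp (-f) ≤ max (-(n : ℝ)) (min f n) :=
      le_max_of_le_right (le_min (by linarith) (by linarith))
    linarith

lemma dv_clamp_tendsto (f : ℝ) :
    Tendsto (fun n : ℕ => max (-(n : ℝ)) (min f n)) atTop (𝓝 f) := by
  obtain ⟨N, hN⟩ := exists_nat_ge |f|
  refine tendsto_const_nhds.congr' ?_
  filter_upwards [eventually_ge_atTop N] with n hn
  have h : |f| ≤ n := hN.trans (Nat.cast_le.2 hn)
  rw [abs_le] at h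
  rw [min_eq_left h.2, max_eq_right h.1]

lemma dv_exp_tendsto : Tendsto (fun n : ℕ => Real.exp (-(n : ℝ))) atTop (𝓝 0) :=
  Real.tendsto_exp_neg_atTop_nhds_zero.comp tendsto_natCast_atTop_atTop

lemma dv_lower (μ ν : Measure α) [IsProbabilityMeasure μ] [IsProbabilityMeasure ν]
    (hac : μ ≪ ν) (hint : Integrable (llr μ ν) μ) :
    Tendsto (fun n : ℕ => ∫ x, dvTrunc μ ν n x ∂μ - Real.exp (-(n : ℝ))) atTop
      (𝓝 (∫ x, llr μ ν x ∂μ)) := by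
  have h : Tendsto (fun n : ℕ => ∫ x, dvTrunc μ ν n x ∂μ) atTop (𝓝 (∫ x, llr μ ν x ∂μ)) := by
    refine tendsto_integral_of_dominated_convergence (fun x => |llr μ ν x|)
      (fun n => (dvTrunc_meas μ ν n).aestronglyMeasurable) hint.abs (fun n => ?_) ?_
    · filter_upwards [dvTrunc_ae μ ν hac] with x hx
      rw [hx n]
      exact dv_clamp_abs _ n
    · filter_upwards [dvTrunc_ae μ ν hac] with x hx
      simp only [hx]
      exact dv_clamp_tendsto _
  simpa using h.sub dv_exp_tendsto

lemma dv_integrable (μ ν : Measure α) [IsProbabilityMeasure μ] [IsProbabilityMeasure ν]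
    (hac : μ ≪ ν) {S : ℝ} (hS : ∀ n, dvJ μ ν (dvTrunc μ ν n) ≤ S) :
    Integrable (llr μ ν) μ := by
  have hg : Integrable (fun x => Real.exp (-llr μ ν x)) μ :=
    (integrable_congr (exp_neg_llr hac)).2 Measure.integrable_toReal_rnDeriv
  set K : ℝ := S + 1 + 2 * ∫ x, Real.exp (-llr μ ν x) ∂μ with hK
  have hb : ∀ n, ∫⁻ x, ‖dvTrunc μ ν n x‖ₑ ∂μ ≤ ENNReal.ofReal K := by
    intro n
    have hi := dv_integrable_of_bdd μ (dvTrunc_meas μ ν n) (dvTrunc_bdd μ ν n)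
    rw [← ofReal_integral_norm_eq_lintegral_enorm hi]
    apply ENNReal.ofReal_le_ofReal
    calc ∫ x, ‖dvTrunc μ ν n x‖ ∂μ
        ≤ ∫ x, (dvTrunc μ ν n x + 2 * Real.exp (-llr μ ν x)) ∂μ := by
          refine integral_mono_ae hi.norm (hi.add (hg.const_mul 2)) ?_
          filter_upwards [dvTrunc_ae μ ν hac] with x hx
          simp only [hx n]
          exact dv_clamp_abs' _ n
      _ = ∫ x, dvTrunc μ ν n x ∂μ + 2 * ∫ x, Real.exp (-llr μ ν x) ∂μ := by
          rw [integral_add hi (hg.const_mul 2), integral_const_mul]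
      _ ≤ K := by
          have h1 := dvTrunc_ge μ ν n
          have h2 := hS n
          have h3 : Real.exp (-(n : ℝ)) ≤ 1 := Real.exp_le_one_iff.2 (by simp)
          linarith
  refine ⟨(measurable_llr μ ν).aestronglyMeasurable, ?_⟩
  have hF : ∫⁻ x, ‖llr μ ν x‖ₑ ∂μ ≤ ENNReal.ofReal K := by
    calc ∫⁻ x, ‖llr μ ν x‖ₑ ∂μ = ∫⁻ x, liminf (fun n => ‖dvTrunc μ ν n x‖ₑ) atTop ∂μ := by
          refine lintegral_congr_ae ?_
          filter_upwards [dvTrunc_ae μ ν hac] with x hx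
          simp only [hx]
          exact ((dv_clamp_tendsto (llr μ ν x)).enorm).liminf_eq.symm
      _ ≤ liminf (fun n => ∫⁻ x, ‖dvTrunc μ ν n x‖ₑ ∂μ) atTop :=
          lintegral_liminf_le fun n => (dvTrunc_meas μ ν n).enorm
      _ ≤ ENNReal.ofReal K := by
          refine (liminf_le_liminf (Eventually.of_forall hb)).trans ?_
          simp
  exact hF.trans_lt ENNReal.ofReal_lt_top

lemma dv_not_ac (μ ν : Measure α) [IsProbabilityMeasure μ] [IsProbabilityMeasure ν]
    (hac : ¬ μ ≪ ν) {S : ℝ}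
    (hS : ∀ φ : α → ℝ, Measurable φ → (∃ C : ℝ, ∀ x, |φ x| ≤ C) → dvJ μ ν φ ≤ S) : False := by
  apply hac
  refine Measure.AbsolutelyContinuous.mk fun A hA hνA => ?_
  by_contra hμA
  have hpos : 0 < μ.real A := ENNReal.toReal_pos hμA (measure_ne_top _ _)
  obtain ⟨n, hn⟩ := exists_nat_gt (S / μ.real A)
  rw [div_lt_iff₀ hpos] at hn
  have h := hS (A.indicator fun _ => (n : ℝ)) (measurable_const.indicator hA)
    ⟨n, fun x => by by_cases hx : x ∈ A <;> simp [hx]⟩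
  have h1 : ∫ y, Real.exp (A.indicator (fun _ => (n : ℝ)) y) ∂ν = 1 := by
    have : (fun y => Real.exp (A.indicator (fun _ => (n : ℝ)) y)) =ᵐ[ν] fun _ => 1 := by
      filter_upwards [measure_eq_zero_iff_ae_notMem.1 hνA] with x hx
      simp [hx]
    rw [integral_congr_ae this]; simp
  unfold dvJ at h
  rw [h1, integral_indicator_const _ hA] at h
  simp at h
  linarith

lemma dv_main (μ ν : Measure α) [IsProbabilityMeasure μ] [IsProbabilityMeasure ν] :
    klDiv μ ν = ⨆ (φ : α → ℝ) (_ : Measurable φ) (_ : ∃ C : ℝ, ∀ x, |φ x| ≤ C),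
      ENNReal.ofReal (dvJ μ ν φ) := by
  set T : ℝ≥0∞ := ⨆ (φ : α → ℝ) (_ : Measurable φ) (_ : ∃ C : ℝ, ∀ x, |φ x| ≤ C),
      ENNReal.ofReal (dvJ μ ν φ) with hT
  have hle : ∀ φ : α → ℝ, Measurable φ → (∃ C : ℝ, ∀ x, |φ x| ≤ C) →
      ENNReal.ofReal (dvJ μ ν φ) ≤ T := fun φ h1 h2 =>
    le_iSup_of_le φ (le_iSup_of_le h1 (le_iSup_of_le h2 le_rfl))
  have hle' : T ≠ ∞ → ∀ φ : α → ℝ, Measurable φ → (∃ C : ℝ, ∀ x, |φ x| ≤ C) →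
      dvJ μ ν φ ≤ T.toReal := fun h φ h1 h2 =>
    (ENNReal.ofReal_le_iff_le_toReal h).1 (hle φ h1 h2)
  unfold klDiv
  split_ifs with h
  · obtain ⟨hac, hint⟩ := h
    apply le_antisymm
    · refine le_of_tendsto' ((ENNReal.continuous_ofReal.tendsto _).comp (dv_lower μ ν hac hint))
        fun n => ?_
      exact (ENNReal.ofReal_le_ofReal (dvTrunc_ge μ ν n)).trans
        (hle _ (dvTrunc_meas μ ν n) ⟨n, dvTrunc_bdd μ ν n⟩)
    · refine iSup_le fun φ => iSup_le fun hφ => iSup_le fun hC => ?_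
      obtain ⟨C, hC⟩ := hC
      exact ENNReal.ofReal_le_ofReal (dv_upper μ ν hac hint hφ hC)
  · by_contra hne
    have hne : T ≠ ∞ := fun h => hne h.symm
    by_cases hac : μ ≪ ν
    · exact h ⟨hac, dv_integrable μ ν hac fun n =>
        hle' hne _ (dvTrunc_meas μ ν n) ⟨n, dvTrunc_bdd μ ν n⟩⟩
    · exact dv_not_ac μ ν hac (hle' hne)

end DVHelpers

/-- **Donsker–Varadhan representation of the KL divergence.** For probability measures
`μ, ν` on `ℝ^d`, as an identity in `[0, +∞]`,
`KL(μ‖ν) = sup { ∫ φ dμ - log ∫ e^φ dν : φ bounded measurable }`;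
in particular, when `μ` is not absolutely continuous w.r.t. `ν`, both sides are `+∞`. -/
theorem donsker_varadhan_representation
    {d : ℕ} (μ ν : Measure (EuclideanSpace ℝ (Fin d)))
    [IsProbabilityMeasure μ] [IsProbabilityMeasure ν] :
    (klDiv μ ν
      = ⨆ (φ : EuclideanSpace ℝ (Fin d) → ℝ)
          (_ : Measurable φ) (_ : ∃ C : ℝ, ∀ x, |φ x| ≤ C),
          ENNReal.ofReal (∫ x, φ x ∂μ - Real.log (∫ y, Real.exp (φ y) ∂ν))) ∧
    (¬ μ ≪ ν → klDiv μ ν = ∞) := by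
  refine ⟨dv_main μ ν, fun h => ?_⟩
  unfold klDiv
  rw [if_neg fun h' => h h'.1]
end

section
/- Let (H, ‖·‖) be a real normed space, Ψ : ℝ^p → H a map, J : ℝ^p → ℝ a C-Lipschitz function for some C ≥ 0, θ₀ ∈ ℝ^p, c > 0, and τ > 0. Assume the non-degeneracy condition ‖Ψ(θ) − Ψ(θ₀)‖² ≥ c ‖θ − θ₀‖² for all θ ∈ ℝ^p. If θ* minimizes the functional Φ(θ) = (1/2τ) ‖Ψ(θ) − Ψ(θ₀)‖² + J(θ) over ℝ^p, then ‖θ* − θ₀‖ ≤ (2C/c) τ; in particular the parametric JKO increment is O(τ). -/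
open scoped NNReal

/-- **The parametric JKO increment is `O(τ)`.**
Let `H` be a real normed space, `Ψ : ℝ^p → H`, `J : ℝ^p → ℝ` a `C`-Lipschitz function,
`θ₀ ∈ ℝ^p`, `c > 0`, `τ > 0`.  Under the non-degeneracy condition
`‖Ψ θ - Ψ θ₀‖² ≥ c ‖θ - θ₀‖²`, any minimizer `θ*` of
`Φ(θ) = (1/(2τ)) ‖Ψ θ - Ψ θ₀‖² + J θ` satisfies `‖θ* - θ₀‖ ≤ (2C/c) τ`. -/
theorem parametric_jko_increment_bound
    {p : ℕ} {H : Type*} [NormedAddCommGroup H]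
    (Ψ : EuclideanSpace ℝ (Fin p) → H)
    (J : EuclideanSpace ℝ (Fin p) → ℝ) (C : ℝ≥0) (hJ : LipschitzWith C J)
    (θ₀ : EuclideanSpace ℝ (Fin p)) (c τ : ℝ) (hc : 0 < c) (hτ : 0 < τ)
    (hnd : ∀ θ : EuclideanSpace ℝ (Fin p), c * ‖θ - θ₀‖ ^ 2 ≤ ‖Ψ θ - Ψ θ₀‖ ^ 2)
    (θstar : EuclideanSpace ℝ (Fin p))
    (hmin : ∀ θ : EuclideanSpace ℝ (Fin p),
      1 / (2 * τ) * ‖Ψ θstar - Ψ θ₀‖ ^ 2 + J θstar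
        ≤ 1 / (2 * τ) * ‖Ψ θ - Ψ θ₀‖ ^ 2 + J θ) :
    ‖θstar - θ₀‖ ≤ 2 * C / c * τ := by
  have h1 := hmin θ₀
  have h2 := hnd θstar
  have h3 : |J θstar - J θ₀| ≤ C * ‖θstar - θ₀‖ := by
    have h := hJ.dist_le_mul θstar θ₀
    rwa [Real.dist_eq, dist_eq_norm] at h
  have h4 := (abs_le.mp h3).1
  simp only [sub_self, norm_zero] at h1
  have h5 : 1 / (2 * τ) * ‖Ψ θstar - Ψ θ₀‖ ^ 2 ≤ C * ‖θstar - θ₀‖ := by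
    norm_num at h1 ⊢
    linarith
  have h6 : ‖Ψ θstar - Ψ θ₀‖ ^ 2 ≤ C * ‖θstar - θ₀‖ * (2 * τ) := by
    rwa [one_div_mul_eq_div, div_le_iff₀ (by positivity)] at h5
  rw [div_mul_eq_mul_div, le_div_iff₀ hc]
  rcases (norm_nonneg (θstar - θ₀)).eq_or_lt with h | h
  · rw [← h, zero_mul]
    positivity
  · refine le_of_mul_le_mul_right ?_ h
    nlinarith
end

section
/- Let H be a real Hilbert space, Ψ : ℝ^p → H continuously differentiable (with Fréchet derivative DΨ(θ) : ℝ^p → H depending continuously on θ), and J : ℝ^p → ℝ differentiable with continuous gradient ∇J. Fix θ₀ ∈ ℝ^p and for each τ > 0 let θ(τ) ∈ ℝ^p be a minimizer of Φ_τ(θ) = (1/2τ) ‖Ψ(θ) − Ψ(θ₀)‖² + J(θ). Define G(θ) ∈ ℝ^{p×p} by G(θ)_{ij} = ⟨DΨ(θ)e_i, DΨ(θ)e_j⟩_H. If there exists M > 0 such that ‖θ(τ) − θ₀‖ ≤ M τ for all sufficiently small τ > 0, then G(θ(τ)) · (θ(τ) − θ₀)/τ + ∇J(θ(τ)) → 0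 as τ → 0⁺; that is, the parametric JKO update is, at first order, an implicit discretization of the preconditioned gradient flow θ̇ = −G(θ)^{-1} ∇J(θ). -/
open Filter Topology Matrix
open scoped RealInnerProductSpace

/-- **The parametric JKO update is an implicit discretization of the preconditioned
gradient flow `θ̇ = -G(θ)⁻¹ ∇J(θ)`.**
Let `H` be a real Hilbert space, `Ψ : ℝ^p → H` continuously differentiable with Fréchet
derivative `DΨ`, `J : ℝ^p → ℝ` differentiable with continuous gradient `∇J`.  For `τ > 0`
let `θ(τ)` minimize `Φ_τ(θ) = (1/(2τ)) ‖Ψ θ - Ψ θ₀‖² + J θ`, and set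
`G(θ)_{ij} = ⟪DΨ(θ) e_i, DΨ(θ) e_j⟫_H`.  If `‖θ(τ) - θ₀‖ ≤ M τ` for all sufficiently
small `τ > 0` (some `M > 0`), then `G(θ(τ)) (θ(τ) - θ₀)/τ + ∇J(θ(τ)) → 0` as `τ → 0⁺`. -/
theorem parametric_jko_approximates_preconditioned_flow
    {p : ℕ} {H : Type*} [NormedAddCommGroup H] [InnerProductSpace ℝ H] [CompleteSpace H]
    (Ψ : EuclideanSpace ℝ (Fin p) → H)
    (DΨ : EuclideanSpace ℝ (Fin p) → (EuclideanSpace ℝ (Fin p) →L[ℝ] H))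
    (hΨ : ∀ θ, HasFDerivAt Ψ (DΨ θ) θ) (hDΨ : Continuous DΨ)
    (J : EuclideanSpace ℝ (Fin p) → ℝ)
    (gradJ : EuclideanSpace ℝ (Fin p) → EuclideanSpace ℝ (Fin p))
    (hJ : ∀ θ, HasGradientAt J (gradJ θ) θ) (hgradJ : Continuous gradJ)
    (θ₀ : EuclideanSpace ℝ (Fin p))
    (θfun : ℝ → EuclideanSpace ℝ (Fin p))
    (hmin : ∀ τ : ℝ, 0 < τ → ∀ θ : EuclideanSpace ℝ (Fin p),
      1 / (2 * τ) * ‖Ψ (θfun τ) - Ψ θ₀‖ ^ 2 + J (θfun τ)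
        ≤ 1 / (2 * τ) * ‖Ψ θ - Ψ θ₀‖ ^ 2 + J θ)
    (G : EuclideanSpace ℝ (Fin p) → Matrix (Fin p) (Fin p) ℝ)
    (hG : ∀ θ i j, G θ i j
      = ⟪DΨ θ (EuclideanSpace.single i 1), DΨ θ (EuclideanSpace.single j 1)⟫)
    (M : ℝ) (hM : 0 < M)
    (hMbound : ∀ᶠ τ in 𝓝[>] (0 : ℝ), ‖θfun τ - θ₀‖ ≤ M * τ) :
    Tendsto
      (fun τ : ℝ =>
        (G (θfun τ) *ᵥ fun i => (θfun τ i - θ₀ i) / τ) + fun i => gradJ (θfun τ) i)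
      (𝓝[>] (0 : ℝ)) (𝓝 0) := by
  have hpos : ∀ᶠ τ in 𝓝[>] (0 : ℝ), 0 < τ := eventually_mem_nhdsWithin
  -- first-order condition
  have hfoc : ∀ τ : ℝ, 0 < τ → ∀ v : EuclideanSpace ℝ (Fin p),
      τ⁻¹ * ⟪DΨ (θfun τ) v, Ψ (θfun τ) - Ψ θ₀⟫ + ⟪gradJ (θfun τ), v⟫ = 0 := by
    intro τ hτ v
    have h1 := (((hΨ (θfun τ)).sub_const (Ψ θ₀)).norm_sq.const_mul (1 / (2 * τ))).add
      (hJ (θfun τ)).hasFDerivAt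
    have hloc : IsLocalMin (fun θ => 1 / (2 * τ) * ‖Ψ θ - Ψ θ₀‖ ^ 2 + J θ) (θfun τ) :=
      Eventually.of_forall (hmin τ hτ)
    have h2 := congrArg (fun L : EuclideanSpace ℝ (Fin p) →L[ℝ] ℝ => L v)
      (hloc.hasFDerivAt_eq_zero h1)
    simp at h2
    rw [real_inner_comm, inner_sub_left, ← h2]
    field_simp
  have hid : Tendsto (fun τ : ℝ => τ) (𝓝[>] (0 : ℝ)) (𝓝 0) :=
    tendsto_nhdsWithin_of_tendsto_nhds tendsto_id
  have hθ : Tendsto θfun (𝓝[>] (0 : ℝ)) (𝓝 θ₀) := by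
    rw [tendsto_iff_norm_sub_tendsto_zero]
    refine squeeze_zero' (Eventually.of_forall fun _ => norm_nonneg _) hMbound ?_
    simpa using hid.const_mul M
  have hD : Tendsto (fun τ => DΨ (θfun τ)) (𝓝[>] (0 : ℝ)) (𝓝 (DΨ θ₀)) :=
    (hDΨ.tendsto θ₀).comp hθ
  have hO : (fun τ => θfun τ - θ₀) =O[𝓝[>] (0 : ℝ)] (fun τ : ℝ => τ) := by
    refine Asymptotics.IsBigO.of_bound M ?_
    filter_upwards [hMbound, hpos] with τ h h'
    rwa [Real.norm_of_nonneg h'.le]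
  have ho1 : (fun τ => Ψ (θfun τ) - Ψ θ₀ - DΨ θ₀ (θfun τ - θ₀))
      =o[𝓝[>] (0 : ℝ)] (fun τ : ℝ => τ) :=
    ((hΨ θ₀).isLittleO.comp_tendsto hθ).trans_isBigO hO
  have ho2 : (fun τ => (DΨ (θfun τ) - DΨ θ₀) (θfun τ - θ₀))
      =o[𝓝[>] (0 : ℝ)] (fun τ : ℝ => τ) := by
    have hz : (fun τ => ‖DΨ (θfun τ) - DΨ θ₀‖) =o[𝓝[>] (0 : ℝ)] (fun _ : ℝ => (1 : ℝ)) := by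
      rw [Asymptotics.isLittleO_one_iff]
      exact tendsto_iff_norm_sub_tendsto_zero.1 hD
    have hm := hz.mul_isBigO hO.norm_left
    simp only [one_mul] at hm
    refine Asymptotics.IsBigO.trans_isLittleO (Asymptotics.IsBigO.of_bound 1 ?_) hm
    refine Eventually.of_forall fun τ => ?_
    rw [one_mul, Real.norm_of_nonneg (by positivity)]
    exact ContinuousLinearMap.le_opNorm _ _
  have hr : Tendsto (fun τ : ℝ => τ⁻¹ • (DΨ (θfun τ) (θfun τ - θ₀) - (Ψ (θfun τ) - Ψ θ₀)))
      (𝓝[>] (0 : ℝ)) (𝓝 0) := by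
    refine ((ho2.sub ho1).tendsto_inv_smul_nhds_zero).congr fun τ => ?_
    congr 1
    rw [_root_.sub_apply]
    abel
  rw [tendsto_pi_nhds]
  intro i
  have hfin : Tendsto (fun τ : ℝ => ⟪DΨ (θfun τ) (EuclideanSpace.single i 1),
      τ⁻¹ • (DΨ (θfun τ) (θfun τ - θ₀) - (Ψ (θfun τ) - Ψ θ₀))⟫)
      (𝓝[>] (0 : ℝ)) (𝓝 0) := by
    have hc : Continuous (fun L : EuclideanSpace ℝ (Fin p) →L[ℝ] H =>
        L (EuclideanSpace.single i (1 : ℝ))) := by fun_prop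
    have := ((hc.tendsto _).comp hD).inner (𝕜 := ℝ) hr
    simpa using this
  refine hfin.congr' ?_
  filter_upwards [hpos] with τ hτ
  have hf := hfoc τ hτ (EuclideanSpace.single i 1)
  have hg : ⟪gradJ (θfun τ), EuclideanSpace.single i (1 : ℝ)⟫ = gradJ (θfun τ) i := by
    simp [EuclideanSpace.inner_single_right]
  have hsum : θfun τ - θ₀ = ∑ j, (θfun τ j - θ₀ j) • EuclideanSpace.single j (1 : ℝ) := by
    ext k
    simp [Finset.sum_apply, Pi.single_apply]
  have hmv : (G (θfun τ) *ᵥ fun i => (θfun τ i - θ₀ i) / τ) i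
      = τ⁻¹ * ⟪DΨ (θfun τ) (EuclideanSpace.single i 1), DΨ (θfun τ) (θfun τ - θ₀)⟫ := by
    rw [hsum, map_sum, inner_sum, Finset.mul_sum]
    simp only [Matrix.mulVec, dotProduct, hG, map_smul, inner_smul_right]
    refine Finset.sum_congr rfl fun j _ => ?_
    ring
  rw [Pi.add_apply, hmv, ← hg, inner_smul_right, inner_sub_right]
  linarith
end
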